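/- (Explicit law of LMC iterates for a quadratic potential) Let f(x) = (m/2)·Σ_{i=1}^d x_i² + (L/2)·Σ_{i=d+1}^{2d} x_i² on ℝ^{2d} with 0 < m ≤ L, and let (x̄_k) be the LMC iterates with step size h, 0 < h < 2/L, started from a deterministic point x₀ ∈ ℝ^{2d}. Then for every k ≥ 1, the coordinates of x̄_k are independent; for 1 ≤ i ≤ d, the i-th coordinate has the Gaussian law N( (1 − mh)^k (x₀)_i , (2/(m(2 − mh)))·(1 − (1 − mh)^{2k}) ), and for d+1 ≤ i ≤ 2d it has the Gaussian law N( (1 − Lh)^k (x₀)_i , (2/(L(2 − Lh)))·(1 − (1 − Lh)^{2k}) ). -/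

import Mathlib

open MeasureTheory ProbabilityTheory Real
open scoped ENNReal NNReal

noncomputable section

/-- `ℝ^d` with the Euclidean structure. -/
abbrev Euc (d : ℕ) := EuclideanSpace ℝ (Fin d)

/-- The standard Gaussian measure `N(0, I_d)` on `ℝ^d`. -/
noncomputable def stdGaussian (d : ℕ) : Measure (Euc d) :=
  (Measure.pi fun _ : Fin d => gaussianReal 0 1).map (EuclideanSpace.equiv (Fin d) ℝ).symm

/-- The centered Gaussian measure on `ℝ^d` with covariance `σ2 • I_d`. -/
noncomputable def isoGaussian (d : ℕ) (σ2 : ℝ) : Measure (Euc d) :=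
  (stdGaussian d).map fun x => Real.sqrt σ2 • x

/-- `B` is a standard `d`-dimensional Brownian motion with respect to the filtration `ℱ`
under the probability measure `P`. -/
structure IsStdBrownian {d : ℕ} {Ω : Type*} {mΩ : MeasurableSpace Ω} (P : Measure Ω)
    (ℱ : Filtration ℝ mΩ) (B : ℝ → Ω → Euc d) : Prop where
  init : ∀ ω, B 0 ω = 0
  cont : ∀ ω, Continuous fun t => B t ω
  adapted : StronglyAdapted ℱ B
  incr_law : ∀ s t : ℝ, 0 ≤ s → s ≤ t →
    P.map (fun ω => B t ω - B s ω) = isoGaussian d (t - s)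
  incr_indep : ∀ s t : ℝ, 0 ≤ s → s ≤ t →
    Indep (MeasurableSpace.comap (fun ω => B t ω - B s ω) inferInstance) (ℱ s) P

/-- `X` is a (pathwise) solution of the overdamped Langevin dynamics
`dX_t = -∇f(X_t) dt + √2 dB_t`: a continuous adapted process satisfying the integral
equation `X_t = X_0 - ∫₀ᵗ ∇f(X_s) ds + √2 B_t` for all `t ≥ 0`. -/
structure IsLangevinSolution {d : ℕ} {Ω : Type*} {mΩ : MeasurableSpace Ω}
    (ℱ : Filtration ℝ mΩ) (f : Euc d → ℝ) (B : ℝ → Ω → Euc d) (X : ℝ → Ω → Euc d) : Prop where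
  cont : ∀ ω, Continuous fun t => X t ω
  adapted : StronglyAdapted ℱ X
  eqn : ∀ ω, ∀ t : ℝ, 0 ≤ t →
    X t ω = X 0 ω - (∫ s in (0:ℝ)..t, gradient f (X s ω)) + Real.sqrt 2 • B t ω

/-- The Hessian bounds `m • I ≼ ∇²f(x) ≼ L • I` for all `x`, expressed through the second
iterated Fréchet derivative: `m ‖v‖² ≤ ⟨v, ∇²f(x) v⟩ ≤ L ‖v‖²`. -/
def HessianBounds {d : ℕ} (m L : ℝ) (f : Euc d → ℝ) : Prop :=
  ∀ x v : Euc d, m * ‖v‖ ^ 2 ≤ iteratedFDeriv ℝ 2 f x ![v, v] ∧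
    iteratedFDeriv ℝ 2 f x ![v, v] ≤ L * ‖v‖ ^ 2


/-- The 2-Wasserstein distance:
`W₂(μ, ν) = inf over couplings γ of (∫ ‖x - y‖² dγ)^{1/2}`, where a coupling of `μ` and `ν`
is a probability measure on the product space whose marginals are `μ` and `ν`. -/
noncomputable def W2 {α : Type*} [MeasurableSpace α] [NormedAddCommGroup α]
    (μ ν : Measure α) : ℝ :=
  Real.sqrt (ENNReal.toReal
    (⨅ γ ∈ {γ : Measure (α × α) |
        IsProbabilityMeasure γ ∧ γ.map Prod.fst = μ ∧ γ.map Prod.snd = ν},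
      ∫⁻ p, (‖p.1 - p.2‖₊ : ℝ≥0∞) ^ 2 ∂γ))

/-- `μ` is the probability measure with density proportional to `exp (-f)` with respect to
Lebesgue measure. -/
def IsGibbs {d : ℕ} (f : Euc d → ℝ) (μ : Measure (Euc d)) : Prop :=
  IsProbabilityMeasure μ ∧ ∃ c : ℝ≥0∞, c ≠ 0 ∧ c ≠ ⊤ ∧
    μ = c • (volume : Measure (Euc d)).withDensity fun x => ENNReal.ofReal (Real.exp (-f x))


/-- The quadratic potential `f(x) = (m/2) Σ_{i<d} x_i² + (L/2) Σ_{d ≤ i < 2d} x_i²` on `ℝ^{2d}`. -/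
noncomputable def fquad (d : ℕ) (m L : ℝ) : Euc (2 * d) → ℝ :=
  fun x => ∑ i : Fin (2 * d), ((if (i : ℕ) < d then m else L) / 2) * x i ^ 2

/-!
The gradient of a diagonal quadratic form acts coordinatewise, so the `i`-th coordinate of the
iterates is a scalar linear recursion driven by the `i`-th coordinates of the noise, with explicit
solution `(1 - cᵢh)^k xᵢ + √(2h) ∑_{j<k} (1 - cᵢh)^(k-1-j) ξ_{j+1,i}`. Different coordinates use
disjoint parts of the independent family `(ξ_{j,i})`, hence are independent, and each one is a
constant plus a sum of independent Gaussians whose variances form a geometric series.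
-/

section Recurrence

lemma eq_pow_mul_add_sum_of_linear_recurrence {R : Type*} [CommSemiring R] {a : R} {u b : ℕ → R}
    (hu : ∀ k, u (k + 1) = a * u k + b k) (k : ℕ) :
    u k = a ^ k * u 0 + ∑ j ∈ Finset.range k, a ^ (k - 1 - j) * b j := by
  induction k with
  | zero => simp
  | succ k ih =>
    have hshift (j) (hj : j ∈ Finset.range k) :
        a ^ (k + 1 - 1 - j) * b j = a * (a ^ (k - 1 - j) * b j) := by
      rw [← mul_assoc, ← pow_succ']
      congr 2
      have := Finset.mem_range.1 hj
      omega
    rw [hu, ih, Finset.sum_range_succ, Finset.sum_congr rfl hshift, ← Finset.mul_sum]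
    simp only [add_tsub_cancel_right, tsub_self]
    ring

lemma two_mul_mul_geom_sum_one_sub_mul_sq {K : Type*} [Field K] {c h : K} (hc : c ≠ 0)
    (hch : c * h ≠ 2) (k : ℕ) :
    2 * h * ∑ j ∈ Finset.range k, ((1 - c * h) ^ 2) ^ j =
      2 / (c * (2 - c * h)) * (1 - (1 - c * h) ^ (2 * k)) := by
  have hne : c * (2 - c * h) ≠ 0 := mul_ne_zero hc (sub_ne_zero.2 hch.symm)
  rw [pow_mul, ← mul_neg_geom_sum, div_mul_eq_mul_div, eq_div_iff hne]
  ring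

end Recurrence

section Independence

variable {Ω ι : Type*} {mΩ : MeasurableSpace Ω} {P : Measure Ω}

lemma iIndepFun_curry {κ : ι → Type*} {𝓧 : (i : ι) → κ i → Type*}
    {m𝓧 : ∀ i j, MeasurableSpace (𝓧 i j)} {X : (i : ι) → (j : κ i) → Ω → 𝓧 i j}
    (mX : ∀ i j, Measurable (X i j))
    (hX : iIndepFun (fun (p : (i : ι) × κ i) ω => X p.1 p.2 ω) P) :
    iIndepFun (fun i ω => (X i · ω)) P := by
  have := hX.isProbabilityMeasure
  have (i : ι) (j : κ i) : IsProbabilityMeasure (P.map (X i j)) :=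
    Measure.isProbabilityMeasure_map (mX i j).aemeasurable
  have hblock (i : ι) : P.map (fun ω => (X i · ω)) = Measure.infinitePi fun j => P.map (X i j) :=
    (hX.precomp sigma_mk_injective).map_fun_eq_infinitePi_map (mX i)
  rw [iIndepFun_iff_map_fun_eq_infinitePi_map (by fun_prop), funext hblock,
    ← Measure.infinitePi_map_piCurry (fun i j => P.map (X i j)),
    ← hX.map_fun_eq_infinitePi_map (fun p => mX p.1 p.2),
    Measure.map_map (by fun_prop) (by fun_prop)]
  rfl

lemma iIndepFun_transpose {κ : Type*} {𝓧 : ι → κ → Type*}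
    [∀ i j, MeasurableSpace (𝓧 i j)] {X : (i : ι) → (j : κ) → Ω → 𝓧 i j}
    (mX : ∀ i j, Measurable (X i j))
    (hrows : iIndepFun (fun i ω => (X i · ω)) P) (hrow : ∀ i, iIndepFun (X i) P) :
    iIndepFun (fun j ω => (X · j ω)) P :=
  iIndepFun_curry (fun j i => mX i j) ((iIndepFun_uncurry' mX hrows hrow).precomp
    ((Equiv.sigmaEquivProd κ ι).trans (Equiv.prodComm κ ι)).injective)

end Independence

section Gaussian

variable {ι Ω : Type*} {mΩ : MeasurableSpace Ω} {P : Measure Ω}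

lemma hasLaw_sum_gaussianReal {X : ι → Ω → ℝ} {μ : ι → ℝ} {v : ι → ℝ≥0}
    (hX : ∀ i, HasLaw (X i) (gaussianReal (μ i) (v i)) P) (hindep : iIndepFun X P)
    (s : Finset ι) :
    HasLaw (∑ i ∈ s, X i) (gaussianReal (∑ i ∈ s, μ i) (∑ i ∈ s, v i)) P := by
  classical
  have := hindep.isProbabilityMeasure
  induction s using Finset.induction_on with
  | empty =>
    simp only [Finset.sum_empty, gaussianReal_zero_var]
    exact hasLaw_dirac_of_ae_eq .rfl
  | insert i s hi ih =>
    have hind : IndepFun (X i) (∑ j ∈ s, X j) P :=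
      (hindep.indepFun_finsetSum_of_notMem₀ (fun j => (hX j).aemeasurable) hi).symm
    simp only [Finset.sum_insert hi]
    exact gaussianReal_conv_gaussianReal ▸ hind.hasLaw_add (hX i) ih

lemma hasLaw_geom_sum_gaussianReal {ζ : ℕ → Ω → ℝ}
    (hζ : ∀ j, HasLaw (ζ j) (gaussianReal 0 1) P) (hindep : iIndepFun ζ P) (a s : ℝ) (k : ℕ) :
    HasLaw (∑ j ∈ Finset.range k, fun ω => a ^ (k - 1 - j) * (s * ζ j ω))
      (gaussianReal 0 (s ^ 2 * ∑ j ∈ Finset.range k, (a ^ 2) ^ j).toNNReal) P := by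
  have hterm (j : ℕ) := gaussianReal_const_mul (gaussianReal_const_mul (hζ j) s) (a ^ (k - 1 - j))
  have hsum := hasLaw_sum_gaussianReal hterm
    (hindep.comp (fun j y => a ^ (k - 1 - j) * (s * y)) fun _ => by fun_prop) (Finset.range k)
  convert hsum using 2
  · simp only [mul_zero, Finset.sum_const_zero]
  · apply NNReal.eq
    rw [Real.coe_toNNReal _ (by positivity), ← Finset.sum_range_reflect, Finset.mul_sum,
      NNReal.coe_sum]
    refine Finset.sum_congr rfl fun j _ => ?_
    simp only [NNReal.coe_mul, NNReal.coe_mk, NNReal.coe_one]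
    ring

variable [Fintype ι] {Z : Ω → EuclideanSpace ℝ ι}

lemma hasLaw_pi_of_hasLaw_stdGaussian
    (hZ : HasLaw Z (ProbabilityTheory.stdGaussian (EuclideanSpace ℝ ι)) P) :
    HasLaw (fun ω i => Z ω i) (Measure.pi fun _ => gaussianReal 0 1) P := by
  have hofLp : HasLaw (WithLp.ofLp : EuclideanSpace ℝ ι → ι → ℝ)
      (Measure.pi fun _ => gaussianReal 0 1)
      (ProbabilityTheory.stdGaussian (EuclideanSpace ℝ ι)) := by
    refine ⟨by fun_prop, ?_⟩
    rw [← map_pi_eq_stdGaussian, Measure.map_map (by fun_prop) (by fun_prop)]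
    exact Measure.map_id
  exact hofLp.comp hZ

lemma hasLaw_apply_of_hasLaw_stdGaussian
    (hZ : HasLaw Z (ProbabilityTheory.stdGaussian (EuclideanSpace ℝ ι)) P) (i : ι) :
    HasLaw (fun ω => Z ω i) (gaussianReal 0 1) P :=
  (measurePreserving_eval (fun _ : ι => gaussianReal 0 1) i).hasLaw.comp
    (hasLaw_pi_of_hasLaw_stdGaussian hZ)

lemma iIndepFun_apply_of_hasLaw_stdGaussian
    (hZ : HasLaw Z (ProbabilityTheory.stdGaussian (EuclideanSpace ℝ ι)) P) :
    iIndepFun (fun i ω => Z ω i) P := by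
  have := hZ.isProbabilityMeasure
  exact (iIndepFun_iff_hasLaw_pi_pi (hasLaw_apply_of_hasLaw_stdGaussian hZ)).2
    (hasLaw_pi_of_hasLaw_stdGaussian hZ)

lemma stdGaussian_eq_stdGaussian_euc (d : ℕ) :
    _root_.stdGaussian d = ProbabilityTheory.stdGaussian (Euc d) :=
  map_pi_eq_stdGaussian

end Gaussian

section Quadratic

variable {ι : Type*} [Fintype ι]

/-- The quadratic potential `x ↦ ∑ᵢ (cᵢ / 2) xᵢ²` whose Hessian is diagonal with entries `cᵢ`. -/
def diagQuadratic (c : ι → ℝ) : EuclideanSpace ℝ ι → ℝ :=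
  fun x => ∑ i, c i / 2 * x i ^ 2

lemma gradient_diagQuadratic_apply (c : ι → ℝ) (x : EuclideanSpace ℝ ι) (i : ι) :
    gradient (diagQuadratic c) x i = c i * x i := by
  have hgrad : HasGradientAt (diagQuadratic c) (WithLp.toLp 2 fun i => c i * x i) x := by
    rw [hasGradientAt_iff_hasFDerivAt]
    refine (HasFDerivAt.fun_sum fun i _ =>
      ((EuclideanSpace.proj i : EuclideanSpace ℝ ι →L[ℝ] ℝ).hasFDerivAt.pow 2).const_mul
        (c i / 2)).congr_fderiv ?_
    ext y
    simp only [sum_apply, smul_apply, InnerProductSpace.toDual_apply_apply, PiLp.inner_apply]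
    refine Finset.sum_congr rfl fun i _ => ?_
    simp only [PiLp.proj_apply, Nat.add_one_sub_one, pow_one, nsmul_eq_mul, Nat.cast_ofNat,
      smul_eq_mul, RCLike.inner_apply, ringHom_apply]
    ring
  rw [hgrad.gradient]

end Quadratic

section LMC

/-- `X` is a family of Langevin Monte Carlo iterates for the potential `f`, with step size `h`,
deterministic starting point `x₀` and noise `ξ`; the noise `ξ 0` does not enter. -/
structure IsLMC {E Ω : Type*} [NormedAddCommGroup E] [InnerProductSpace ℝ E] [CompleteSpace E]
    (f : E → ℝ) (h : ℝ) (x₀ : E) (ξ X : ℕ → Ω → E) : Prop where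
  zero : X 0 = fun _ => x₀
  succ (k : ℕ) : X (k + 1) = fun ω =>
    X k ω - h • gradient f (X k ω) + √(2 * h) • ξ (k + 1) ω

variable {ι Ω : Type*} [Fintype ι] {mΩ : MeasurableSpace Ω} {P : Measure Ω} {c : ι → ℝ} {h : ℝ}
  {x₀ : EuclideanSpace ℝ ι} {ξ X : ℕ → Ω → EuclideanSpace ℝ ι}

lemma lmc_diagQuadratic_apply (hX : IsLMC (diagQuadratic c) h x₀ ξ X) (k : ℕ) (i : ι) (ω : Ω) :
    X k ω i = (1 - c i * h) ^ k * x₀ i +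
      ∑ j ∈ Finset.range k, (1 - c i * h) ^ (k - 1 - j) * (√(2 * h) * ξ (j + 1) ω i) := by
  have hcoord (k : ℕ) : X (k + 1) ω i = (1 - c i * h) * X k ω i + √(2 * h) * ξ (k + 1) ω i := by
    simp only [hX.succ, PiLp.add_apply, PiLp.sub_apply, PiLp.smul_apply, smul_eq_mul,
      gradient_diagQuadratic_apply]
    ring
  have hsol := eq_pow_mul_add_sum_of_linear_recurrence (u := fun k => X k ω i) hcoord k
  simpa only [hX.zero] using hsol

lemma iIndepFun_lmc_diagQuadratic_apply (hX : IsLMC (diagQuadratic c) h x₀ ξ X)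
    (hξmeas : ∀ k, Measurable (ξ k)) (hξcoord : ∀ k, iIndepFun (fun i ω => ξ k ω i) P)
    (hindep : iIndepFun ξ P) (k : ℕ) :
    iIndepFun (fun i ω => X k ω i) P := by
  have hpaths : iIndepFun (fun i ω j => ξ j ω i) P :=
    iIndepFun_transpose (fun _ _ => by fun_prop)
      (hindep.comp (fun _ => WithLp.ofLp) fun _ => by fun_prop) hξcoord
  simp_rw [lmc_diagQuadratic_apply hX]
  exact hpaths.comp (fun i y => (1 - c i * h) ^ k * x₀ i +
    ∑ j ∈ Finset.range k, (1 - c i * h) ^ (k - 1 - j) * (√(2 * h) * y (j + 1)))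
    fun _ => by fun_prop

lemma hasLaw_lmc_diagQuadratic_apply (hX : IsLMC (diagQuadratic c) h x₀ ξ X) (hh : 0 ≤ h) {i : ι}
    (hξlaw : ∀ k, HasLaw (fun ω => ξ k ω i) (gaussianReal 0 1) P)
    (hindep : iIndepFun (fun k ω => ξ k ω i) P) (k : ℕ) :
    HasLaw (fun ω => X k ω i) (gaussianReal ((1 - c i * h) ^ k * x₀ i)
      (2 * h * ∑ j ∈ Finset.range k, ((1 - c i * h) ^ 2) ^ j).toNNReal) P := by
  have hnoise := hasLaw_geom_sum_gaussianReal (fun j => hξlaw (j + 1))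
    (hindep.precomp (add_left_injective 1)) (1 - c i * h) √(2 * h) k
  have hlaw := gaussianReal_const_add hnoise ((1 - c i * h) ^ k * x₀ i)
  rw [zero_add, Real.sq_sqrt (by positivity)] at hlaw
  refine hlaw.congr (.of_forall fun ω => ?_)
  simp only [lmc_diagQuadratic_apply hX, Finset.sum_apply]

theorem lmc_quadratic_iterate_law_general (hX : IsLMC (diagQuadratic c) h x₀ ξ X)
    (hc : ∀ i, c i ≠ 0) (hh : 0 ≤ h) (hch : ∀ i, c i * h ≠ 2) (hξmeas : ∀ k, Measurable (ξ k))
    (hξlaw : ∀ k, HasLaw (ξ k) (ProbabilityTheory.stdGaussian (EuclideanSpace ℝ ι)) P)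
    (hindep : iIndepFun ξ P) (k : ℕ) :
    iIndepFun (fun i ω => X k ω i) P ∧
      ∀ i, HasLaw (fun ω => X k ω i) (gaussianReal ((1 - c i * h) ^ k * x₀ i)
        (2 / (c i * (2 - c i * h)) * (1 - (1 - c i * h) ^ (2 * k))).toNNReal) P := by
  refine ⟨iIndepFun_lmc_diagQuadratic_apply hX hξmeas
    (fun k => iIndepFun_apply_of_hasLaw_stdGaussian (hξlaw k)) hindep k, fun i => ?_⟩
  rw [← two_mul_mul_geom_sum_one_sub_mul_sq (hc i) (hch i)]
  exact hasLaw_lmc_diagQuadratic_apply hX hh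
    (fun k => hasLaw_apply_of_hasLaw_stdGaussian (hξlaw k) i)
    (hindep.comp (fun _ y => y i) fun _ => by fun_prop) k

end LMC

/-- **Explicit law of the LMC iterates for a quadratic potential.**
For `f(x) = (m/2) Σ_{i<d} x_i² + (L/2) Σ_{d≤i<2d} x_i²` with `0 < m ≤ L` and step size
`0 < h < 2/L`, started from a deterministic `x₀ ∈ ℝ^{2d}`, the coordinates of the `k`-th LMC
iterate (`k ≥ 1`) are independent, the first `d` of them being
`N((1 - mh)^k (x₀)_i, (2/(m(2 - mh)))(1 - (1 - mh)^{2k}))` and the last `d` being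
`N((1 - Lh)^k (x₀)_i, (2/(L(2 - Lh)))(1 - (1 - Lh)^{2k}))`. -/
theorem lmc_quadratic_iterate_law
    {d : ℕ} {Ω : Type*} {mΩ : MeasurableSpace Ω} {P : Measure Ω} [IsProbabilityMeasure P]
    {m L : ℝ} (hm : 0 < m) (hmL : m ≤ L)
    {h : ℝ} (hh0 : 0 < h) (hh1 : h < 2 / L)
    (x0 : Euc (2 * d))
    {ξ : ℕ → Ω → Euc (2 * d)} (hξmeas : ∀ k, Measurable (ξ k))
    (hξlaw : ∀ k, P.map (ξ k) = stdGaussian (2 * d))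
    (hindep : iIndepFun ξ P)
    {Xb : ℕ → Ω → Euc (2 * d)} (hXb0 : Xb 0 = fun _ => x0)
    (hXb : ∀ k : ℕ, Xb (k + 1) = fun ω =>
      Xb k ω - h • gradient (fquad d m L) (Xb k ω) + Real.sqrt (2 * h) • ξ (k + 1) ω)
    (k : ℕ) (hk : 1 ≤ k) :
    iIndepFun (fun i : Fin (2 * d) => fun ω => Xb k ω i) P ∧
      ∀ i : Fin (2 * d),
        P.map (fun ω => Xb k ω i) =
          if (i : ℕ) < d then
            gaussianReal ((1 - m * h) ^ k * x0 i)
              (Real.toNNReal (2 / (m * (2 - m * h)) * (1 - (1 - m * h) ^ (2 * k))))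
          else
            gaussianReal ((1 - L * h) ^ k * x0 i)
              (Real.toNNReal (2 / (L * (2 - L * h)) * (1 - (1 - L * h) ^ (2 * k)))) := by
  have hL : 0 < L := hm.trans_le hmL
  have hLh : L * h < 2 := by rwa [lt_div_iff₀' hL] at hh1
  have hmh : m * h < 2 := (mul_le_mul_of_nonneg_right hmL hh0.le).trans_lt hLh
  have hLMC : IsLMC (diagQuadratic fun i : Fin (2 * d) => if (i : ℕ) < d then m else L)
      h x0 ξ Xb := ⟨hXb0, hXb⟩
  obtain ⟨hcoord, hlaw⟩ := lmc_quadratic_iterate_law_general hLMC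
    (fun i => by split_ifs <;> positivity) hh0.le (fun i => by split_ifs <;> exact ne_of_lt ‹_›)
    hξmeas (fun j => ⟨(hξmeas j).aemeasurable, (hξlaw j).trans (stdGaussian_eq_stdGaussian_euc _)⟩)
    hindep k
  refine ⟨hcoord, fun i => ?_⟩
  rw [(hlaw i).map_eq]
  split_ifs <;> rfl

end
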